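/- Let g, h, ξ > 0 and let (h_i)_{i≥1} be a sequence of real numbers. Let (w_i)_{i≥1} be a sequence of positive reals with w_1 ≤ g²/ξ, and suppose that for every i ≥ 1, w_{i+1} = g² v_i(2h_{i+1}), where v_i(ω) = (1/(2πw_i)) [ (1 + ((ω + 2h_i)/(2w_i))²)⁻¹ + (1 + ((ω − 2h_i)/(2w_i))²)⁻¹ ], and suppose the non-resonance condition min(|2h_{i+1} − 2h_i|, |2h_{i+1} + 2h_i|) ≥ h/2 holds for every i ≥ 1. Then for all i ≥ 1, w_i ≤ (g²/ξ) · (16g²/(πh²))^{i−1}. In particular, if 16g² < πh², the widths w_i decay exponentially in i. -/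

import Mathlib

open Real
open ProbabilityTheory (cauchyPDFReal cauchyPDFReal_def cauchyPDFReal_def')
open scoped NNReal

/-! Off resonance a Lorentzian is seen only through its tail, which is proportional to its
halfwidth. Evaluating the structure factor of one spin at the frequency of the next therefore
produces a width proportional to the previous one, so a step along the chain multiplies the width
by a factor bounded uniformly in the position. -/

theorem cauchyPDFReal_le_of_le_abs_sub {x₀ x δ : ℝ} (γ : ℝ≥0) (hδ : 0 < δ) (hx : δ ≤ |x - x₀|) :
    cauchyPDFReal x₀ γ x ≤ γ / (π * δ ^ 2) := by
  have hδx : δ ^ 2 ≤ (x - x₀) ^ 2 := sq_le_sq.mpr (by rwa [abs_of_pos hδ])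
  calc cauchyPDFReal x₀ γ x = γ / (π * ((x - x₀) ^ 2 + (γ : ℝ) ^ 2)) := by
        rw [cauchyPDFReal_def, div_eq_mul_inv, mul_inv]
        ring
    _ ≤ γ / (π * δ ^ 2) := by
        gcongr
        exact le_add_of_le_of_nonneg hδx (sq_nonneg _)

/-- The structure factor of a spin with level splitting `b` hybridized with its surroundings: the
sum of the two unit-area Lorentzians of halfwidth `γ` centered at `±b` (identically `0`
when `γ = 0`). The spin `i` of the chain has `b = 2 h_i` and `γ = 2 w_i`. -/
noncomputable def structureFactor (b : ℝ) (γ : ℝ≥0) (ω : ℝ) : ℝ :=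
  cauchyPDFReal (-b) γ ω + cauchyPDFReal b γ ω

theorem structureFactor_eq (b : ℝ) (γ : ℝ≥0) (ω : ℝ) :
    structureFactor b γ ω =
      1 / (π * γ) * ((1 + ((ω + b) / γ) ^ 2)⁻¹ + (1 + ((ω - b) / γ) ^ 2)⁻¹) := by
  rw [structureFactor, cauchyPDFReal_def', cauchyPDFReal_def', sub_neg_eq_add, NNReal.coe_inv,
    one_div, mul_inv, mul_add]

theorem structureFactor_le {b ω δ : ℝ} (γ : ℝ≥0) (hδ : 0 < δ) (hsub : δ ≤ |ω - b|)
    (hadd : δ ≤ |ω + b|) : structureFactor b γ ω ≤ 2 * (γ / (π * δ ^ 2)) := by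
  rw [structureFactor, two_mul]
  rw [← sub_neg_eq_add] at hadd
  gcongr
  · exact cauchyPDFReal_le_of_le_abs_sub γ hδ hadd
  · exact cauchyPDFReal_le_of_le_abs_sub γ hδ hsub

/-- **Exponential decay of hybridization widths along a strongly disordered chain.**
Let `g, h, ξ > 0` and `(h_i)` a sequence of fields. Suppose `(w_i)` are positive with
`w₁ ≤ g²/ξ` and `w_{i+1} = g² v_i(2 h_{i+1})`, where `v_i` is the two-Lorentzian structure
factor of halfwidth `2w_i` centered at `±2h_i`, and the non-resonance condition
`min(|2h_{i+1} − 2h_i|, |2h_{i+1} + 2h_i|) ≥ h/2` holds for all `i ≥ 1`. Then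
`w_i ≤ (g²/ξ) (16g²/(πh²))^{i−1}` for all `i ≥ 1`. -/
theorem hybridization_width_exponential_decay
    (g h ξ : ℝ) (hg : 0 < g) (hh : 0 < h) (hξ : 0 < ξ)
    (hfield : ℕ → ℝ) (w : ℕ → ℝ) (hwpos : ∀ i, 1 ≤ i → 0 < w i)
    (hw1 : w 1 ≤ g ^ 2 / ξ)
    (v : ℕ → ℝ → ℝ)
    (hv : ∀ i, v i = fun ω => (1 / (2 * π * w i)) *
      ((1 + ((ω + 2 * hfield i) / (2 * w i)) ^ 2)⁻¹
        + (1 + ((ω - 2 * hfield i) / (2 * w i)) ^ 2)⁻¹))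
    (hrec : ∀ i, 1 ≤ i → w (i + 1) = g ^ 2 * v i (2 * hfield (i + 1)))
    (hres : ∀ i, 1 ≤ i →
      h / 2 ≤ min |2 * hfield (i + 1) - 2 * hfield i| |2 * hfield (i + 1) + 2 * hfield i|) :
    ∀ i, 1 ≤ i → w i ≤ (g ^ 2 / ξ) * (16 * g ^ 2 / (π * h ^ 2)) ^ (i - 1) := by
  have width_succ_le : ∀ i, 1 ≤ i → w (i + 1) ≤ 16 * g ^ 2 / (π * h ^ 2) * w i := by
    intro i hi
    obtain ⟨γ, hγ⟩ : ∃ γ : ℝ≥0, (γ : ℝ) = 2 * w i := ⟨⟨2 * w i, by linarith [hwpos i hi]⟩, rfl⟩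
    obtain ⟨hsub, hadd⟩ := le_min_iff.mp (hres i hi)
    calc w (i + 1) = g ^ 2 * structureFactor (2 * hfield i) γ (2 * hfield (i + 1)) := by
          rw [hrec i hi, hv i, structureFactor_eq, hγ, mul_left_comm π, mul_assoc 2 π]
      _ ≤ g ^ 2 * (2 * (γ / (π * (h / 2) ^ 2))) := by
          gcongr
          exact structureFactor_le γ (half_pos hh) hsub hadd
      _ = 16 * g ^ 2 / (π * h ^ 2) * w i := by
          rw [hγ]
          ring
  intro i hi
  obtain ⟨k, rfl⟩ := Nat.exists_eq_add_of_le' hi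
  calc w (k + 1) ≤ (16 * g ^ 2 / (π * h ^ 2)) ^ k * w 1 :=
        le_geom (u := fun j ↦ w (j + 1)) (by positivity) k
          fun j _ ↦ width_succ_le (j + 1) j.succ_pos
    _ ≤ (16 * g ^ 2 / (π * h ^ 2)) ^ k * (g ^ 2 / ξ) := by gcongr
    _ = g ^ 2 / ξ * (16 * g ^ 2 / (π * h ^ 2)) ^ (k + 1 - 1) := mul_comm _ _
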